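/- arXiv:2403.06262 — 2 statements merged into one kernel-verified Lean document; each statement's English description precedes it below -/
import Mathlib

section
/- A bounded linear operator T : H → Y from a Hilbert space H to a Banach space Y is compact if and only if ‖T x_n‖ → 0 for every orthonormal sequence (x_n) in H. -/
open Filter

theorem compact_iff_norm_null_on_orthonormal_sequences
    {𝕜 H Y : Type*} [RCLike 𝕜] [NormedAddCommGroup H] [InnerProductSpace 𝕜 H]
    [CompleteSpace H] [NormedAddCommGroup Y] [NormedSpace 𝕜 Y] [CompleteSpace Y]
    (T : H →L[𝕜] Y) :
    IsCompact (closure (T '' Metric.closedBall (0 : H) 1)) ↔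
      ∀ x : ℕ → H, Orthonormal 𝕜 x →
        Tendsto (fun n => ‖T (x n)‖) atTop (nhds 0) := by
  constructor
  · intro hK x hx
    apply tendsto_of_subseq_tendsto
    intro ns hns
    have hmem : ∀ n, T (x (ns n)) ∈ closure (T '' Metric.closedBall (0 : H) 1) := fun n =>
      subset_closure ⟨x (ns n), by simp [hx.1 (ns n)], rfl⟩
    obtain ⟨y, -, φ, hφ, hlim⟩ := hK.tendsto_subseq hmem
    refine ⟨φ, ?_⟩
    have hy : y = 0 := by
      rw [SeparatingDual.eq_zero_iff_forall_dual_eq_zero (R := 𝕜)]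
      intro f
      have h1 : Tendsto (fun n => f (T (x (ns (φ n))))) atTop (nhds (f y)) :=
        (f.continuous.tendsto y).comp hlim
      have h2 : Tendsto (fun n => f (T (x n))) atTop (nhds 0) := by
        set v := (InnerProductSpace.toDual 𝕜 H).symm (f.comp T) with hv
        have h3 : ∀ n, f (T (x n)) = inner 𝕜 v (x n) := fun n => by
          rw [hv, InnerProductSpace.toDual_symm_apply]; rfl
        have h4 := (hx.inner_products_summable v).tendsto_atTop_zero
        rw [tendsto_zero_iff_norm_tendsto_zero]
        have h5 := h4.sqrt
        simp only [Real.sqrt_zero, Real.sqrt_sq (norm_nonneg _)] at h5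
        refine h5.congr fun n => ?_
        rw [h3, norm_inner_symm]
      exact tendsto_nhds_unique h1 (h2.comp (hns.comp hφ.tendsto_atTop))
    have := hlim.norm
    rw [hy, norm_zero] at this
    exact this
  · intro h
    have key : ∀ ε > 0, ∃ U : Submodule 𝕜 H, FiniteDimensional 𝕜 U ∧
        ∀ x ∈ Uᗮ, ‖T x‖ ≤ ε * ‖x‖ := by
      intro ε hε
      by_contra! hcon
      obtain ⟨f, hf, hr⟩ := exists_seq_of_forall_finset_exists
        (fun x : H => ‖x‖ = 1 ∧ ε < ‖T x‖) (fun x y => inner 𝕜 x y = 0) (by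
          intro s _
          obtain ⟨x, hx, hlt⟩ := hcon (Submodule.span 𝕜 (s : Set H))
            (FiniteDimensional.span_finset 𝕜 s)
          have hx0 : x ≠ 0 := by
            rintro rfl
            simp at hlt
          have hn : 0 < ‖x‖ := norm_pos_iff.2 hx0
          refine ⟨((‖x‖⁻¹ : ℝ) : 𝕜) • x, ⟨?_, ?_⟩, ?_⟩
          · rw [norm_smul, RCLike.norm_ofReal, abs_of_pos (inv_pos.2 hn)]
            field_simp
          · rw [map_smul, norm_smul, RCLike.norm_ofReal, abs_of_pos (inv_pos.2 hn)]
            rw [inv_mul_eq_div, lt_div_iff₀ hn]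
            exact hlt
          · intro z hz
            rw [inner_smul_right, (Submodule.mem_orthogonal _ _).1 hx z
              (Submodule.subset_span hz), mul_zero])
      have ho : Orthonormal 𝕜 f := by
        refine ⟨fun n => (hf n).1, fun i j hij => ?_⟩
        rcases lt_or_gt_of_ne hij with hl | hl
        · exact hr i j hl
        · exact inner_eq_zero_symm.1 (hr j i hl)
      have := ge_of_tendsto' (h f ho) (fun n => (hf n).2.le)
      linarith
    refine (isCompactOperator_iff_isCompact_closure_image_closedBall (T : H →ₗ[𝕜] Y) one_pos).1 ?_
    have hc := isClosed_setOfPred_isCompactOperator (σ₁₂ := RingHom.id 𝕜) (M₁ := H) (M₂ := Y)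
    have : T ∈ closure {f : H →L[𝕜] Y | IsCompactOperator f} := by
      rw [Metric.mem_closure_iff]
      intro ε hε
      obtain ⟨U, hU, hb⟩ := key (ε / 2) (half_pos hε)
      refine ⟨(T.comp U.subtypeL).comp U.orthogonalProjection, ?_, ?_⟩
      · have : ProperSpace U := FiniteDimensional.proper 𝕜 U
        exact (isCompactOperator_of_locallyCompactSpace_rng (T.comp U.subtypeL)).comp_clm _
      · rw [dist_eq_norm]
        refine lt_of_le_of_lt (ContinuousLinearMap.opNorm_le_bound _ (half_pos hε).le fun x => ?_)
          (half_lt_self hε)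
        have h1 := hb _ (U.sub_starProjection_mem_orthogonal x)
        have h2 : ‖x - U.starProjection x‖ ≤ ‖x‖ := by
          have h4 : Uᗮ.starProjection x = x - U.starProjection x := by
            rw [Submodule.starProjection_orthogonal_val]
          rw [← h4]
          exact Submodule.norm_starProjection_apply_le _ x
        calc _ = ‖T (x - U.starProjection x)‖ := by
              rw [map_sub]; rfl
          _ ≤ _ := h1
          _ ≤ _ := by gcongr
    rw [hc.closure_eq] at this
    exact this
end

section
/- Let (z_n) be a sequence of unit vectors in a Hilbert space H with |⟨z_i, z_j⟩| ≤ 2^{-2(i+j)} for all i ≠ j. Then there exists an orthonormal sequence (x_n) in H with ‖x_n − z_n‖ ≤ 2^{-n} for all n. -/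
open scoped InnerProductSpace

/-- Bound on the coefficients and on the norm of the projection. -/
lemma proj_bound
    {𝕜 H : Type*} [RCLike 𝕜] [NormedAddCommGroup H] [InnerProductSpace 𝕜 H]
    (z : ℕ → H) (hz : ∀ n, ‖z n‖ = 1)
    (ho : ∀ i j : ℕ, i ≠ j → ‖⟪z i, z j⟫_𝕜‖ ≤ (1 / 4 : ℝ) ^ i * (1 / 4 : ℝ) ^ j)
    (m : ℕ) (c : ℕ → 𝕜) (p : H) (hp : p = ∑ i ∈ Finset.range (m + 1), c i • z i)
    (hu : ∀ i < m + 1, ⟪z i, p⟫_𝕜 = ⟪z i, z (m + 1)⟫_𝕜) :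
    ‖p‖ ^ 2 ≤ 17 / 13 * ((1 / 4 : ℝ) ^ (m + 1)) ^ 2 := by
  set q : ℝ := (1 / 4 : ℝ) ^ (m + 1) with hq
  have hq0 : 0 ≤ q := by positivity
  set t : ℕ → ℝ := fun i => ‖c i‖ * (1 / 4 : ℝ) ^ i with ht
  have ht0 : ∀ i, 0 ≤ t i := fun i => by positivity
  set A : ℝ := ∑ i ∈ Finset.range (m + 1), t i with hA
  have h1 : ∀ j < m + 1, t j ≤ (1 / 16 : ℝ) ^ j * (q + (A - t j)) := by
    intro j hj
    have hjm : j ∈ Finset.range (m + 1) := Finset.mem_range.2 hj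
    have e := hu j hj
    rw [hp, inner_sum, ← Finset.add_sum_erase _ _ hjm, inner_smul_right,
      inner_self_eq_norm_sq_to_K, hz] at e
    have e2 : c j = ⟪z j, z (m + 1)⟫_𝕜 -
        ∑ i ∈ (Finset.range (m + 1)).erase j, ⟪z j, c i • z i⟫_𝕜 := by
      rw [← e]; simp
    have e3 : ‖c j‖ ≤ (1 / 4 : ℝ) ^ j * q + (1 / 4 : ℝ) ^ j * (A - t j) := by
      have hAt : A - t j = ∑ i ∈ (Finset.range (m + 1)).erase j, t i := by
        rw [hA, ← Finset.add_sum_erase _ _ hjm]; ring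
      calc ‖c j‖ ≤ ‖⟪z j, z (m + 1)⟫_𝕜‖ +
            ‖∑ i ∈ (Finset.range (m + 1)).erase j, ⟪z j, c i • z i⟫_𝕜‖ := by
              conv_lhs => rw [e2]
              exact norm_sub_le _ _
        _ ≤ _ := by
          refine add_le_add (ho _ _ (by omega)) ?_
          rw [hAt, Finset.mul_sum]
          refine (norm_sum_le _ _).trans (Finset.sum_le_sum fun i hi => ?_)
          rw [inner_smul_right, norm_mul]
          have := mul_le_mul_of_nonneg_left (ho j i (Finset.ne_of_mem_erase hi).symm)
            (norm_nonneg (c i))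
          simp only [ht]
          linarith
    have e4 := mul_le_mul_of_nonneg_right e3 (by positivity : (0 : ℝ) ≤ (1 / 4 : ℝ) ^ j)
    have e5 : (1 / 16 : ℝ) ^ j = (1 / 4 : ℝ) ^ j * (1 / 4 : ℝ) ^ j := by
      rw [← mul_pow]; norm_num
    rw [e5]
    simp only [ht] at e4 ⊢
    linarith
  have hA0 : 0 ≤ A := Finset.sum_nonneg fun i _ => ht0 i
  have h0 : t 0 ≤ (q + A) / 2 := by
    have := h1 0 (by omega)
    simp only [pow_zero, one_mul] at this
    linarith
  have hgeo : ∀ k : ℕ, ∑ i ∈ Finset.range k, (1 / 16 : ℝ) ^ (i + 1) ≤ 1 / 15 := by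
    intro k
    have : ∑ i ∈ Finset.range k, (1 / 16 : ℝ) ^ (i + 1) = 1 / 15 - 1 / 15 * (1 / 16 : ℝ) ^ k := by
      induction k with
      | zero => simp
      | succ k ih => rw [Finset.sum_range_succ, ih]; ring
    rw [this]
    have : (0 : ℝ) ≤ (1 / 16 : ℝ) ^ k := by positivity
    linarith
  have hAle : A ≤ 17 / 13 * q := by
    have e : A = ∑ i ∈ Finset.range m, t (i + 1) + t 0 := by
      rw [hA, Finset.sum_range_succ']
    have e2 : ∑ i ∈ Finset.range m, t (i + 1) ≤ 1 / 15 * (q + A) := by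
      refine le_trans (Finset.sum_le_sum (g := fun i => (1 / 16 : ℝ) ^ (i + 1) * (q + A))
        fun i hi => ?_) ?_
      · refine (h1 (i + 1) (by simpa using hi)).trans ?_
        refine mul_le_mul_of_nonneg_left ?_ (by positivity)
        have := ht0 (i + 1)
        linarith
      · rw [← Finset.sum_mul]
        exact mul_le_mul_of_nonneg_right (hgeo m) (by positivity)
    linarith
  have hpp : ‖p‖ ^ 2 ≤ A * q := by
    have e : ⟪p, p⟫_𝕜 = ∑ i ∈ Finset.range (m + 1), (starRingEnd 𝕜) (c i) * ⟪z i, z (m + 1)⟫_𝕜 := by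
      conv_lhs => rw [hp, sum_inner]
      refine Finset.sum_congr rfl fun i hi => ?_
      rw [inner_smul_left, ← hp, hu i (Finset.mem_range.1 hi)]
    have e2 : ‖p‖ ^ 2 = ‖⟪p, p⟫_𝕜‖ := by
      rw [inner_self_eq_norm_sq_to_K]; simp
    rw [e2, e, hA, Finset.sum_mul]
    refine (norm_sum_le _ _).trans (Finset.sum_le_sum fun i hi => ?_)
    rw [norm_mul, RCLike.norm_conj]
    have := mul_le_mul_of_nonneg_left (ho i (m + 1) (by have := Finset.mem_range.1 hi; omega))
            (norm_nonneg (c i))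
    simp only [ht]
    linarith
  nlinarith

open InnerProductSpace in
theorem almost_orthogonal_perturbation_of_orthonormal
    {𝕜 H : Type*} [RCLike 𝕜] [NormedAddCommGroup H] [InnerProductSpace 𝕜 H]
    [CompleteSpace H] (z : ℕ → H) (hz : ∀ n, ‖z n‖ = 1)
    (ho : ∀ i j : ℕ, i ≠ j → ‖⟪z i, z j⟫_𝕜‖ ≤ (1 / 2 : ℝ) ^ (2 * (i + j))) :
    ∃ x : ℕ → H, Orthonormal 𝕜 x ∧ ∀ n : ℕ, ‖x n - z n‖ ≤ (1 / 2 : ℝ) ^ n := by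
  have ho' : ∀ i j : ℕ, i ≠ j → ‖⟪z i, z j⟫_𝕜‖ ≤ (1 / 4 : ℝ) ^ i * (1 / 4 : ℝ) ^ j := by
    intro i j hij
    refine (ho i j hij).trans_eq ?_
    rw [pow_mul, pow_add]; norm_num
  set u : ℕ → H := gramSchmidt 𝕜 z with hu
  have huz : ∀ n, ∀ i < n, ⟪z i, u n⟫_𝕜 = 0 := fun n i hi =>
    inner_eq_zero_symm.1 (gramSchmidt_inv_triangular 𝕜 z hi)
  have hspan : ∀ n, ∃ c : ℕ → 𝕜, ∑ i ∈ Finset.range n, c i • z i = z n - u n := by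
    intro n
    rw [← Submodule.mem_span_image_finset_iff_exists_fun' (R := 𝕜)]
    have : ((Finset.range n : Finset ℕ) : Set ℕ) = Set.Iio n := by ext; simp
    rw [this, ← span_gramSchmidt_Iio 𝕜 z n]
    have e := gramSchmidt_def'' 𝕜 z n
    rw [← eq_sub_iff_add_eq'.2 e.symm]
    refine Submodule.sum_mem _ fun i hi => Submodule.smul_mem _ _ (Submodule.subset_span ?_)
    exact Set.mem_image_of_mem _ (by simpa using hi)
  have hbound : ∀ n, ‖z n - u n‖ ^ 2 ≤ 1 / 2 * ((1 / 2 : ℝ) ^ n) ^ 2 := by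
    intro n
    obtain ⟨c, hc⟩ := hspan n
    cases n with
    | zero => rw [← hc]; simp
    | succ m =>
      have h := proj_bound z hz ho' m c (z (m + 1) - u (m + 1)) hc.symm (fun i hi => by
        rw [inner_sub_right, huz _ i hi, sub_zero])
      refine h.trans ?_
      have e : (1 / 4 : ℝ) ^ (m + 1) = (1 / 2 : ℝ) ^ (m + 1) * (1 / 2 : ℝ) ^ (m + 1) := by
        rw [← mul_pow]; norm_num
      have e1 : (1 / 2 : ℝ) ^ (m + 1) ≤ 1 / 2 := by
        rw [pow_succ]
        have : (1 / 2 : ℝ) ^ m ≤ 1 := pow_le_one₀ (by norm_num) (by norm_num)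
        linarith
      have e0 : 0 ≤ (1 / 2 : ℝ) ^ (m + 1) := by positivity
      rw [e]
      generalize (1 / 2 : ℝ) ^ (m + 1) = s at *
      have e2 : s ^ 2 ≤ 1 / 4 := by nlinarith
      nlinarith [mul_le_mul_of_nonneg_left e2 (sq_nonneg s), sq_nonneg s]
  have horth : ∀ n, ⟪u n, z n - u n⟫_𝕜 = 0 := by
    intro n
    obtain ⟨c, hc⟩ := hspan n
    rw [← hc, inner_sum]
    refine Finset.sum_eq_zero fun i hi => ?_
    rw [inner_smul_right, inner_eq_zero_symm.1 (huz n i (Finset.mem_range.1 hi)), mul_zero]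
  have hpyth : ∀ n, ‖u n‖ ^ 2 + ‖z n - u n‖ ^ 2 = 1 := by
    intro n
    have := norm_add_sq_eq_norm_sq_add_norm_sq_of_inner_eq_zero _ _ (horth n)
    rw [add_sub_cancel, hz] at this
    nlinarith
  have hs1 : ∀ n : ℕ, ((1 / 2 : ℝ) ^ n) ^ 2 ≤ 1 := fun n =>
    pow_le_one₀ (by positivity) (pow_le_one₀ (by norm_num) (by norm_num))
  have hne : ∀ n, u n ≠ 0 := by
    intro n h
    have h1 := hpyth n
    have h2 := hbound n
    have h3 := hs1 n
    rw [h, norm_zero] at h1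
    rw [h] at h2
    linarith
  refine ⟨fun n => (‖u n‖ : 𝕜)⁻¹ • u n, ⟨fun n => norm_smul_inv_norm (hne n), ?_⟩, fun n => ?_⟩
  · intro i j hij
    simp only [inner_smul_left, inner_smul_right]
    rw [gramSchmidt_orthogonal 𝕜 z hij]
    simp
  · have hr : 0 < ‖u n‖ := norm_pos_iff.2 (hne n)
    have e : (‖u n‖ : 𝕜)⁻¹ • u n - z n = ((‖u n‖⁻¹ - 1 : ℝ) : 𝕜) • u n - (z n - u n) := by
      push_cast
      rw [sub_smul, one_smul]; abel
    have e1 : ‖((‖u n‖⁻¹ - 1 : ℝ) : 𝕜) • u n‖ ^ 2 = (1 - ‖u n‖) ^ 2 := by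
      rw [norm_smul, RCLike.norm_ofReal, mul_pow, sq_abs, ← mul_pow, sub_mul,
        inv_mul_cancel₀ hr.ne', one_mul]
    have e2 : ‖((‖u n‖⁻¹ - 1 : ℝ) : 𝕜) • u n - (z n - u n)‖ ^ 2 =
        (1 - ‖u n‖) ^ 2 + ‖z n - u n‖ ^ 2 := by
      rw [← e1, @norm_sub_sq 𝕜, inner_smul_left, horth n]
      simp
    have h1 := hpyth n
    have h2 := hbound n
    have h3 := hs1 n
    show ‖(‖u n‖ : 𝕜)⁻¹ • u n - z n‖ ≤ _
    refine (sq_le_sq₀ (norm_nonneg _) (by positivity)).1 ?_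
    rw [e, e2]
    have h4 : ‖u n‖ ≤ 1 := by nlinarith [sq_nonneg ‖z n - u n‖]
    nlinarith
end
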